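/- Let ψ be a unit vector in C^d with all components nonzero and let 0 < p < d/(d+1). Then the maximal reliability over all 0 ≤ E ≤ I of R_{ψ,p}(E) = p⟨ψ|diag E|ψ⟩ + (1−p)⟨ψ|(I−E)|ψ⟩ equals p(1 + f_ψ^{-1}(p/(1−p))), where f_ψ(z) = ∑_k |ψ_k|²/(z+|ψ_k|²). -/

import Mathlib

open Matrix
open scoped ComplexOrder

/-!
Write `F = 1 - E`, `D = diag |ψ⟩⟨ψ|`, `φ = (z + D)⁻¹ ψ`, and let `P` be the projection onto `φ`.
The positive matrix `M = z P + D` satisfies `M φ = ψ` and `⟨φ|M|φ⟩ = ⟨φ|ψ⟩ = f_ψ(z)`, so the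
Cauchy-Schwarz inequality for `M` reads `|ψ⟩⟨ψ| ≤ f_ψ(z) M`. Pairing it with `F ≤ 1` gives
`⟨ψ|F|ψ⟩ ≤ f_ψ(z) (z + tr (F D))`, with equality at `F = P`. When `f_ψ(z) = p / (1 - p)` this is
exactly the bound on the reliability of `1 - F`, in which the terms `tr (F D)` cancel.
-/

section Trace

open scoped MatrixOrder

variable {ι 𝕜 : Type*} [Fintype ι] [RCLike 𝕜]

lemma trace_mul_nonneg_of_posSemidef {A B : Matrix ι ι 𝕜} (hA : A.PosSemidef)
    (hB : B.PosSemidef) : 0 ≤ (A * B).trace := by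
  classical
  obtain ⟨C, rfl⟩ := CStarAlgebra.nonneg_iff_eq_star_mul_self.mp hB.nonneg
  rw [star_eq_conjTranspose, ← mul_assoc, trace_mul_comm, ← mul_assoc]
  exact (hA.mul_mul_conjTranspose_same C).trace_nonneg

/-- The orthogonal projection `|v⟩⟨v| / ⟨v|v⟩` onto the line spanned by `v`, as a matrix; it is the
zero matrix for `v = 0`. -/
def lineProjection (v : ι → 𝕜) : Matrix ι ι 𝕜 :=
  (star v ⬝ᵥ v)⁻¹ • vecMulVec v (star v)

lemma lineProjection_mulVec (v x : ι → 𝕜) :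
    lineProjection v *ᵥ x = ((star v ⬝ᵥ v)⁻¹ * (star v ⬝ᵥ x)) • v := by
  rw [lineProjection, smul_mulVec, vecMulVec_mulVec, op_smul_eq_smul, smul_smul]

lemma lineProjection_mulVec_self (v : ι → 𝕜) : lineProjection v *ᵥ v = v := by
  obtain rfl | hv := eq_or_ne v 0
  · simp only [mulVec_zero]
  · rw [lineProjection_mulVec, inv_mul_cancel₀ (dotProduct_star_self_eq_zero.not.mpr hv), one_smul]

lemma isStarProjection_lineProjection (v : ι → 𝕜) : IsStarProjection (lineProjection v) where
  isIdempotentElem := by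
    have h : lineProjection v * vecMulVec v (star v) = vecMulVec v (star v) := by
      rw [mul_vecMulVec, lineProjection_mulVec_self]
    rw [IsIdempotentElem]
    nth_rw 2 [lineProjection]
    rw [mul_smul_comm, h, lineProjection]
  isSelfAdjoint := by
    rw [IsSelfAdjoint, star_eq_conjTranspose, lineProjection, conjTranspose_smul,
      conjTranspose_vecMulVec, star_star, star_inv₀, ← star_dotProduct_star, star_star]

lemma posSemidef_lineProjection (v : ι → 𝕜) : (lineProjection v).PosSemidef :=
  (isStarProjection_lineProjection v).nonneg.posSemidef

lemma posSemidef_one_sub_lineProjection [DecidableEq ι] (v : ι → 𝕜) :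
    (1 - lineProjection v).PosSemidef :=
  (isStarProjection_lineProjection v).one_sub_nonneg.posSemidef

lemma trace_mul_lineProjection (A : Matrix ι ι 𝕜) (v : ι → 𝕜) :
    (A * lineProjection v).trace = (star v ⬝ᵥ v)⁻¹ * (star v ⬝ᵥ A *ᵥ v) := by
  rw [lineProjection, mul_smul_comm, mul_vecMulVec, trace_smul, trace_vecMulVec, smul_eq_mul,
    dotProduct_comm (A *ᵥ v)]

lemma trace_lineProjection_le_one (v : ι → 𝕜) : (lineProjection v).trace ≤ 1 := by
  classical
  rw [← one_mul (lineProjection v), trace_mul_lineProjection, one_mulVec]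
  exact inv_mul_le_one

lemma trace_mul_lineProjection_le_one [DecidableEq ι] {A : Matrix ι ι 𝕜}
    (hA : (1 - A).PosSemidef) (v : ι → 𝕜) : (A * lineProjection v).trace ≤ 1 := by
  have h := trace_mul_nonneg_of_posSemidef hA (posSemidef_lineProjection v)
  rw [sub_mul, one_mul, trace_sub, sub_nonneg] at h
  exact h.trans (trace_lineProjection_le_one v)

lemma dotProduct_mulVec_le_trace_mul {A : Matrix ι ι 𝕜} (hA : A.PosSemidef) (v : ι → 𝕜) :
    star v ⬝ᵥ A *ᵥ v ≤ A.trace * (star v ⬝ᵥ v) := by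
  classical
  obtain rfl | hv := eq_or_ne v 0
  · simp only [mulVec_zero, dotProduct_zero, mul_zero, le_refl]
  have h := trace_mul_nonneg_of_posSemidef hA (posSemidef_one_sub_lineProjection v)
  rw [mul_sub, mul_one, trace_sub, sub_nonneg, trace_mul_lineProjection] at h
  rwa [inv_mul_le_iff₀ (dotProduct_star_self_pos_iff.mpr hv), mul_comm] at h

/-- The Cauchy-Schwarz inequality `|Mφ⟩⟨Mφ| ≤ ⟨φ|M|φ⟩ M`, paired with `A`. -/
lemma dotProduct_mulVec_mulVec_le {A M : Matrix ι ι 𝕜} (hA : A.PosSemidef) (hM : M.PosSemidef)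
    (φ : ι → 𝕜) :
    star (M *ᵥ φ) ⬝ᵥ A *ᵥ (M *ᵥ φ) ≤ (A * M).trace * (star φ ⬝ᵥ M *ᵥ φ) := by
  classical
  obtain ⟨C, rfl⟩ := CStarAlgebra.nonneg_iff_eq_star_mul_self.mp hM.nonneg
  have h := dotProduct_mulVec_le_trace_mul (hA.mul_mul_conjTranspose_same C) (C *ᵥ φ)
  rw [trace_mul_comm, ← mul_assoc, trace_mul_comm] at h
  simpa only [star_eq_conjTranspose, star_mulVec, dotProduct_mulVec, vecMul_vecMul, mulVec_mulVec,
    conjTranspose_mul, conjTranspose_conjTranspose, mul_assoc] using h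

lemma dotProduct_mulVec_le_of_smul_add_mulVec_eq [DecidableEq ι] {D F : Matrix ι ι 𝕜}
    (hD : D.PosSemidef) (hF : F.PosSemidef) (hF' : (1 - F).PosSemidef) {z : 𝕜} (hz : 0 ≤ z)
    {φ ψ : ι → 𝕜} (hψ : z • φ + D *ᵥ φ = ψ) :
    star ψ ⬝ᵥ F *ᵥ ψ ≤ (z + (F * D).trace) * (star φ ⬝ᵥ ψ) := by
  set M := z • lineProjection φ + D
  have hM : M.PosSemidef := ((posSemidef_lineProjection φ).smul hz).add hD
  have hMφ : M *ᵥ φ = ψ := by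
    rw [add_mulVec, smul_mulVec, lineProjection_mulVec_self, hψ]
  have hφψ : 0 ≤ star φ ⬝ᵥ ψ := hMφ ▸ hM.dotProduct_mulVec_nonneg φ
  calc star ψ ⬝ᵥ F *ᵥ ψ ≤ (F * M).trace * (star φ ⬝ᵥ ψ) := by
        simpa only [hMφ] using dotProduct_mulVec_mulVec_le hF hM φ
    _ = (z * (F * lineProjection φ).trace + (F * D).trace) * (star φ ⬝ᵥ ψ) := by
        rw [mul_add, mul_smul_comm, trace_add, trace_smul, smul_eq_mul]
    _ ≤ (z + (F * D).trace) * (star φ ⬝ᵥ ψ) := by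
        gcongr
        exact mul_le_of_le_one_right hz (trace_mul_lineProjection_le_one hF' φ)

lemma dotProduct_lineProjection_mulVec_of_smul_add_mulVec_eq {D : Matrix ι ι 𝕜}
    (hD : D.IsHermitian) {z : 𝕜} (hz : IsSelfAdjoint z) {φ ψ : ι → 𝕜}
    (hψ : z • φ + D *ᵥ φ = ψ) :
    star ψ ⬝ᵥ lineProjection φ *ᵥ ψ
      = (z + (lineProjection φ * D).trace) * (star φ ⬝ᵥ ψ) := by
  obtain rfl | hφ := eq_or_ne φ 0
  · simp [lineProjection]
  have hN : star φ ⬝ᵥ φ ≠ 0 := dotProduct_star_self_eq_zero.not.mpr hφ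
  have hφψ : star φ ⬝ᵥ ψ = z * (star φ ⬝ᵥ φ) + star φ ⬝ᵥ D *ᵥ φ := by
    rw [← hψ, dotProduct_add, dotProduct_smul, smul_eq_mul]
  have hψφ : star ψ ⬝ᵥ φ = star φ ⬝ᵥ ψ := by
    rw [hφψ, ← hψ, star_add, star_smul, hz.star_eq, star_mulVec, hD.eq, add_dotProduct,
      smul_dotProduct, smul_eq_mul, dotProduct_mulVec]
  rw [lineProjection_mulVec, dotProduct_smul, smul_eq_mul, hψφ, trace_mul_comm,
    trace_mul_lineProjection]
  nth_rw 2 [hφψ]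
  field_simp

end Trace

section Reliability

variable {ι 𝕜 : Type*} [RCLike 𝕜]

/-- The dephased state `diag |ψ⟩⟨ψ|`. -/
def dephasedState [DecidableEq ι] (ψ : ι → 𝕜) : Matrix ι ι 𝕜 :=
  diagonal fun k => ((‖ψ k‖ ^ 2 : ℝ) : 𝕜)

lemma posSemidef_dephasedState [DecidableEq ι] (ψ : ι → 𝕜) : (dephasedState ψ).PosSemidef :=
  .diagonal fun k => RCLike.ofReal_nonneg.mpr (sq_nonneg ‖ψ k‖)

/-- The vector `(z + diag |ψ⟩⟨ψ|)⁻¹ ψ`, whose inner product with `ψ` is `f_ψ(z)`. -/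
def resolventVector (ψ : ι → 𝕜) (z : ℝ) : ι → 𝕜 :=
  fun k => ψ k / ((z + ‖ψ k‖ ^ 2 : ℝ) : 𝕜)

variable [Fintype ι]

lemma smul_resolventVector_add_dephasedState_mulVec [DecidableEq ι] {ψ : ι → 𝕜} {z : ℝ}
    (hψz : ∀ k, z + ‖ψ k‖ ^ 2 ≠ 0) :
    (z : 𝕜) • resolventVector ψ z + dephasedState ψ *ᵥ resolventVector ψ z = ψ := by
  ext k
  have hk : ((z + ‖ψ k‖ ^ 2 : ℝ) : 𝕜) ≠ 0 := RCLike.ofReal_ne_zero.mpr (hψz k)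
  rw [Pi.add_apply, Pi.smul_apply, smul_eq_mul, dephasedState, mulVec_diagonal, ← add_mul,
    ← RCLike.ofReal_add, resolventVector, mul_div_cancel₀ _ hk]

lemma star_resolventVector_dotProduct (ψ : ι → 𝕜) (z : ℝ) :
    star (resolventVector ψ z) ⬝ᵥ ψ = ((∑ k, ‖ψ k‖ ^ 2 / (z + ‖ψ k‖ ^ 2) : ℝ) : 𝕜) := by
  rw [dotProduct, RCLike.ofReal_sum]
  refine Finset.sum_congr rfl fun k _ => ?_
  rw [Pi.star_apply, resolventVector, star_div₀, RCLike.star_def, RCLike.conj_ofReal,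
    div_mul_eq_mul_div, RCLike.conj_mul, RCLike.ofReal_div, RCLike.ofReal_pow]

lemma lt_one_of_sum_div_eq {ψ : ι → 𝕜} {p z : ℝ} (hψ : ψ ≠ 0)
    (hψz : ∀ k, 0 < z + ‖ψ k‖ ^ 2)
    (hfz : ∑ k, ‖ψ k‖ ^ 2 / (z + ‖ψ k‖ ^ 2) = p / (1 - p)) : p < 1 := by
  obtain ⟨k, hk⟩ := Function.ne_iff.mp hψ
  have hpos : 0 < p / (1 - p) := hfz ▸ Finset.sum_pos'
    (fun i _ => div_nonneg (sq_nonneg _) (hψz i).le)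
    ⟨k, Finset.mem_univ k, div_pos (pow_pos (norm_pos_iff.mpr hk) 2) (hψz k)⟩
  obtain ⟨-, h⟩ | ⟨h, h'⟩ := div_pos_iff.mp hpos <;> linarith

variable [DecidableEq ι]

/-- The reliability `R_{ψ,p}(E) = p⟨ψ|diag E|ψ⟩ + (1 - p)⟨ψ|(1 - E)|ψ⟩`. The real part only
turns this scalar, real for Hermitian `E`, into a term of type `ℝ`. -/
def reliability (ψ : ι → 𝕜) (p : ℝ) (E : Matrix ι ι 𝕜) : ℝ :=
  RCLike.re ((p : 𝕜) * (star ψ ⬝ᵥ (diagonal (fun k => E k k) *ᵥ ψ)) +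
    (1 - (p : 𝕜)) * (star ψ ⬝ᵥ ((1 - E) *ᵥ ψ)))

lemma dotProduct_diagonal_mulVec_eq_trace (ψ : ι → 𝕜) (E : Matrix ι ι 𝕜) :
    star ψ ⬝ᵥ (diagonal (fun k => E k k) *ᵥ ψ) = (E * dephasedState ψ).trace := by
  rw [dephasedState, dotProduct, trace]
  refine Finset.sum_congr rfl fun k _ => ?_
  rw [mulVec_diagonal, diag_apply, mul_diagonal, mul_left_comm, Pi.star_apply, RCLike.star_def,
    RCLike.conj_mul, RCLike.ofReal_pow]

lemma trace_dephasedState (ψ : ι → 𝕜) :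
    (dephasedState ψ).trace = ((∑ k, ‖ψ k‖ ^ 2 : ℝ) : 𝕜) := by
  rw [dephasedState, trace_diagonal, RCLike.ofReal_sum]

lemma reliability_one_sub (ψ : ι → 𝕜) (p : ℝ) (F : Matrix ι ι 𝕜) :
    reliability ψ p (1 - F) =
      p * (∑ k, ‖ψ k‖ ^ 2 - RCLike.re (F * dephasedState ψ).trace)
        + (1 - p) * RCLike.re (star ψ ⬝ᵥ F *ᵥ ψ) := by
  rw [reliability, dotProduct_diagonal_mulVec_eq_trace, sub_sub_cancel, sub_mul, one_mul,
    trace_sub, trace_dephasedState, ← RCLike.ofReal_one, ← RCLike.ofReal_sub, map_add,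
    RCLike.re_ofReal_mul, RCLike.re_ofReal_mul, map_sub, RCLike.ofReal_re]

variable {ψ : ι → 𝕜} {p z : ℝ}

lemma reliability_le (hz : 0 ≤ z) (hψz : ∀ k, z + ‖ψ k‖ ^ 2 ≠ 0) (hp : p < 1)
    (hfz : ∑ k, ‖ψ k‖ ^ 2 / (z + ‖ψ k‖ ^ 2) = p / (1 - p)) {E : Matrix ι ι 𝕜}
    (hE : E.PosSemidef) (hE' : (1 - E).PosSemidef) :
    reliability ψ p E ≤ p * (∑ k, ‖ψ k‖ ^ 2 + z) := by
  obtain ⟨F, rfl⟩ : ∃ F, E = 1 - F := ⟨1 - E, (sub_sub_cancel 1 E).symm⟩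
  rw [sub_sub_cancel] at hE'
  have hle := (RCLike.le_iff_re_im.mp (dotProduct_mulVec_le_of_smul_add_mulVec_eq
    (posSemidef_dephasedState ψ) hE' hE (RCLike.ofReal_nonneg.mpr hz)
    (smul_resolventVector_add_dephasedState_mulVec hψz))).1
  rw [star_resolventVector_dotProduct, hfz, RCLike.re_mul_ofReal, map_add, RCLike.ofReal_re,
    mul_div_assoc', le_div_iff₀ (sub_pos.mpr hp)] at hle
  rw [reliability_one_sub]
  linarith

lemma reliability_one_sub_lineProjection_resolventVector (hψz : ∀ k, z + ‖ψ k‖ ^ 2 ≠ 0)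
    (hp : p ≠ 1) (hfz : ∑ k, ‖ψ k‖ ^ 2 / (z + ‖ψ k‖ ^ 2) = p / (1 - p)) :
    reliability ψ p (1 - lineProjection (resolventVector ψ z)) =
      p * (∑ k, ‖ψ k‖ ^ 2 + z) := by
  have heq := congrArg RCLike.re (dotProduct_lineProjection_mulVec_of_smul_add_mulVec_eq
    (posSemidef_dephasedState ψ).isHermitian (RCLike.conj_ofReal z)
    (smul_resolventVector_add_dephasedState_mulVec hψz))
  rw [star_resolventVector_dotProduct, hfz, RCLike.re_mul_ofReal, map_add, RCLike.ofReal_re,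
    mul_div_assoc', eq_div_iff (sub_ne_zero.mpr hp.symm)] at heq
  rw [reliability_one_sub]
  linarith

theorem stmt_7_general (hψ : ψ ≠ 0) (hz : 0 ≤ z) (hψz : ∀ k, 0 < z + ‖ψ k‖ ^ 2)
    (hfz : ∑ k, ‖ψ k‖ ^ 2 / (z + ‖ψ k‖ ^ 2) = p / (1 - p)) :
    IsGreatest {r : ℝ | ∃ E : Matrix ι ι 𝕜, E.PosSemidef ∧ (1 - E).PosSemidef ∧
      r = reliability ψ p E} (p * (∑ k, ‖ψ k‖ ^ 2 + z)) := by
  have hψz' : ∀ k, z + ‖ψ k‖ ^ 2 ≠ 0 := fun k => (hψz k).ne'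
  have hp : p < 1 := lt_one_of_sum_div_eq hψ hψz hfz
  constructor
  · refine ⟨1 - lineProjection (resolventVector ψ z), posSemidef_one_sub_lineProjection _, ?_, ?_⟩
    · rw [sub_sub_cancel]
      exact posSemidef_lineProjection _
    · exact (reliability_one_sub_lineProjection_resolventVector hψz' hp.ne hfz).symm
  · rintro _ ⟨E, hE, hE', rfl⟩
    exact reliability_le hz hψz' hp hfz hE hE'

end Reliability

/-- maximal reliability for known ψ and p < d/(d+1). -/
theorem stmt_7 (d : ℕ) (hd : 2 ≤ d) (ψ : Fin d → ℂ)
    (hψ : ∑ k, ‖ψ k‖ ^ 2 = 1) (hψk : ∀ k, ψ k ≠ 0)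
    (p : ℝ) (hp0 : 0 < p) (hp1 : p < d / (d + 1))
    (z : ℝ) (hz : 0 ≤ z)
    (hfz : ∑ k, ‖ψ k‖ ^ 2 / (z + ‖ψ k‖ ^ 2) = p / (1 - p)) :
    sSup {r : ℝ | ∃ E : Matrix (Fin d) (Fin d) ℂ, E.PosSemidef ∧ (1 - E).PosSemidef ∧
        r = ((p : ℂ) * (star ψ ⬝ᵥ (Matrix.diagonal (fun k => E k k) *ᵥ ψ)) +
          ((1 : ℂ) - (p : ℂ)) * (star ψ ⬝ᵥ ((1 - E) *ᵥ ψ))).re} = p * (1 + z) := by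
  have hψ0 : ψ ≠ 0 := Function.ne_iff.mpr ⟨⟨0, by omega⟩, hψk _⟩
  have hψz (k : Fin d) : 0 < z + ‖ψ k‖ ^ 2 := add_pos_of_nonneg_of_pos hz (by simp [hψk k])
  exact (stmt_7_general hψ0 hz hψz hfz).csSup_eq.trans (by rw [hψ])
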